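/- For every s ∈ [−1,1] and every t ∈ [0,1), one has 1 − 2st + t² > 0 and (1 − 2st + t²)^{−1/2} = Σ_{l=0}^∞ P_l(s) t^l, the series converging absolutely. -/

import Mathlib

open Real

/-- The Legendre polynomials, defined via Rodrigues' formula
`P_l(s) = (1/(2^l l!)) (d/ds)^l (s² − 1)^l`. -/
noncomputable def legendreP (l : ℕ) (s : ℝ) : ℝ :=
  (1 / ((2 : ℝ) ^ l * (Nat.factorial l : ℝ))) *
    iteratedDeriv l (fun t : ℝ => (t ^ 2 - 1) ^ l) s

open Polynomial in
lemma lg_XD (p : ℝ[X]) (k : ℕ) :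
    derivative^[k+1] (X * p) = X * derivative^[k+1] p + ((k:ℝ[X])+1) * derivative^[k] p := by
  induction k with
  | zero => simp; ring
  | succ k ih =>
    rw [Function.iterate_succ_apply', ih]
    simp only [derivative_add, derivative_mul, derivative_X, ← Function.iterate_succ_apply' (f := derivative),
      derivative_natCast, derivative_one]
    push_cast
    ring

open Polynomial in
/-- unnormalised Legendre polynomial -/
noncomputable def lgR (n : ℕ) : ℝ[X] := derivative^[n] ((X^2-1)^n)

open Polynomial in
lemma lg_Dw (n : ℕ) : derivative ((X^2-1 : ℝ[X])^(n+1)) = C (2*((n:ℝ)+1)) * (X * (X^2-1)^n) := by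
  have h3 : (C (2*((n:ℝ)+1)) : ℝ[X]) = 2 * ((n:ℝ[X])+1) := by
    rw [C_mul, C_add, C_1, map_natCast, map_ofNat]
  rw [derivative_pow, h3]
  simp
  ring

open Polynomial in
lemma lg_A (n : ℕ) : derivative (lgR (n+1)) =
    C (2*((n:ℝ)+1)) * (X * derivative (lgR n) + ((n:ℝ[X])+1) * lgR n) := by
  unfold lgR
  rw [← Function.iterate_succ_apply' (f := derivative), Function.iterate_succ_apply, lg_Dw,
    iterate_derivative_C_mul, lg_XD, ← Function.iterate_succ_apply' (f := derivative)]

open Polynomial in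
lemma lg_B (n : ℕ) : lgR (n+1) =
    2 * ((X^2-1) * derivative (lgR n) + ((n:ℝ[X])+1) * X * lgR n) := by
  have h1 : lgR (n+1) = C (2*((n:ℝ)+1)) * derivative^[n] (X * (X^2-1)^n) := by
    unfold lgR
    rw [Function.iterate_succ_apply, lg_Dw, iterate_derivative_C_mul]
  have h2 : lgR (n+1) = X * (X * derivative (lgR n) + ((n:ℝ[X])+1) * lgR n)
      + ((n:ℝ[X])+1) * derivative^[n] (X * (X^2-1)^n) - derivative (lgR n) := by
    have : (X^2-1 : ℝ[X])^(n+1) = X * (X * (X^2-1)^n) - (X^2-1)^n := by ring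
    unfold lgR
    rw [this, iterate_derivative_sub, lg_XD, lg_XD, ← Function.iterate_succ_apply' (f := derivative)]
  have h3 : (C (2*((n:ℝ)+1)) : ℝ[X]) = 2 * ((n:ℝ[X])+1) := by
    rw [C_mul, C_add, C_1, map_natCast, map_ofNat]
  rw [h3] at h1
  linear_combination 2 * h2 - h1

open Polynomial in
lemma lg_rec (n : ℕ) (s : ℝ) : (lgR (n+2)).eval s =
    2 * (2*n+3) * s * (lgR (n+1)).eval s - 4 * (n+1)^2 * (lgR n).eval s := by
  have hB := congrArg (Polynomial.eval s) (lg_B n)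
  have hB1 := congrArg (Polynomial.eval s) (lg_B (n+1))
  have hA := congrArg (Polynomial.eval s) (lg_A n)
  simp at hB hB1 hA
  rw [show n+2 = n+1+1 from rfl, hB1, hA]
  linear_combination (-2) * s * (n+1) * hB

open Polynomial in
lemma lg_iter (p : ℝ[X]) (n : ℕ) :
    iteratedDeriv n (fun t => p.eval t) = fun t => (derivative^[n] p).eval t := by
  induction n with
  | zero => simp
  | succ n ih =>
    rw [iteratedDeriv_succ, ih]
    ext t
    rw [Polynomial.deriv, Function.iterate_succ_apply']

lemma lg_eq (n : ℕ) (s : ℝ) :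
    legendreP n s = (lgR n).eval s / (2^n * (n.factorial:ℝ)) := by
  have h := lg_iter ((Polynomial.X^2-1)^n) n
  simp only [Polynomial.eval_pow, Polynomial.eval_sub, Polynomial.eval_X, Polynomial.eval_one] at h
  unfold legendreP lgR
  rw [h]
  ring

lemma lg_zero (s : ℝ) : legendreP 0 s = 1 := by simp [lg_eq, lgR]

lemma lg_one (s : ℝ) : legendreP 1 s = s := by
  simp [lg_eq, lgR]
  ring

lemma lgP_rec (n : ℕ) (s : ℝ) : ((n:ℝ)+2) * legendreP (n+2) s =
    (2*n+3) * s * legendreP (n+1) s - (n+1) * legendreP n s := by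
  simp only [lg_eq, lg_rec, Nat.factorial_succ, pow_succ]
  have := Nat.factorial_ne_zero n
  push_cast
  field_simp
  ring

section
open PowerSeries

noncomputable def lgF (s : ℝ) : PowerSeries ℂ := PowerSeries.mk fun n => (legendreP n s : ℂ)

lemma lgF_ode (s : ℝ) : (1 - C (2*(s:ℂ)) * X + X^2) * d⁄dX ℂ (lgF s) = (C (s:ℂ) - X) * lgF s := by
  have h : (1 - C (2*(s:ℂ)) * X + X^2) * d⁄dX ℂ (lgF s) = d⁄dX ℂ (lgF s) -
    C (2*(s:ℂ)) * (X * d⁄dX ℂ (lgF s)) + X * (X * d⁄dX ℂ (lgF s)) := by ring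
  rw [h, sub_mul]
  ext n
  rcases n with _ | _ | n
  · rw [map_add, map_sub, coeff_derivative]
    simp [lgF, lg_zero, lg_one, sub_mul]
  · have := lgP_rec 0 s
    have := congrArg (fun x : ℝ => (x:ℂ)) this
    rw [map_add, map_sub, coeff_C_mul]
    simp [coeff_derivative, lgF, lg_zero, lg_one, coeff_succ_X_mul] at this ⊢
    linear_combination this
  · have := lgP_rec (n+1) s
    have := congrArg (fun x : ℝ => (x:ℂ)) this
    rw [map_add, map_sub, coeff_C_mul]
    simp [coeff_derivative, lgF, coeff_succ_X_mul] at this ⊢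
    linear_combination this

lemma lgF_sq (s : ℝ) : (lgF s)^2 * (1 - C (2*(s:ℂ)) * X + X^2) = 1 := by
  apply derivative.ext
  · have h2 : d⁄dX ℂ (1 - C (2*(s:ℂ)) * X + X^2 : PowerSeries ℂ) = - C (2*(s:ℂ)) + 2 * X := by
      simp [Derivation.leibniz, derivative_one, derivative_pow]
    rw [Derivation.leibniz, h2, derivative_pow, derivative_one]
    simp only [smul_eq_mul]
    have h3 : (C (2*(s:ℂ)) : PowerSeries ℂ) = 2 * C (s:ℂ) := by rw [map_mul, map_ofNat]
    have := lgF_ode s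
    rw [h3] at this ⊢
    push_cast
    linear_combination 2 * lgF s * this
  · simp [lgF, lg_zero]

noncomputable def lgA (n : ℕ) : ℝ := (n.centralBinom : ℝ) / 4^n

lemma lgA_rec (n : ℕ) : 2 * ((n:ℝ)+1) * lgA (n+1) = (2*n+1) * lgA n := by
  have := congrArg (fun x : ℕ => (x:ℝ)) (Nat.succ_mul_centralBinom_succ n)
  push_cast at this
  unfold lgA
  rw [pow_succ]
  field_simp
  linear_combination 2 * this

noncomputable def lgG (z : ℂ) : PowerSeries ℂ := PowerSeries.mk fun n => (lgA n : ℂ) * z^n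

lemma lgG_ode (z : ℂ) : 2 * ((1 - C z * X) * d⁄dX ℂ (lgG z)) = C z * lgG z := by
  have h : 2 * ((1 - C z * X) * d⁄dX ℂ (lgG z)) = C 2 * (d⁄dX ℂ (lgG z) -
    C z * (X * d⁄dX ℂ (lgG z))) := by rw [map_ofNat]; ring
  rw [h]
  ext n
  have := congrArg (fun x : ℝ => (x:ℂ)) (lgA_rec n)
  rcases n with _ | n
  · rw [coeff_C_mul, map_sub, coeff_derivative]
    simp [lgG] at this ⊢
    linear_combination z * this
  · simp only [coeff_derivative, lgG, coeff_succ_X_mul, coeff_C_mul, map_sub, coeff_mk] at this ⊢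
    push_cast at this ⊢
    linear_combination z^(n+2) * this

lemma lgG_sq (z : ℂ) : (lgG z)^2 * (1 - C z * X) = 1 := by
  apply derivative.ext
  · have h2 : d⁄dX ℂ (1 - C z * X : PowerSeries ℂ) = - C z := by
      simp [Derivation.leibniz, derivative_one]
    rw [Derivation.leibniz, h2, derivative_pow, derivative_one]
    simp only [smul_eq_mul]
    push_cast
    linear_combination lgG z * lgG_ode z
  · simp [lgG, lgA]

lemma lgF_eq (s : ℝ) (z w : ℂ) (h1 : z * w = 1) (h2 : z + w = 2 * s) :
    lgF s = lgG z * lgG w := by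
  have hq : (1 - C (2*(s:ℂ)) * X + X^2 : PowerSeries ℂ) = (1 - C z * X) * (1 - C w * X) := by
    rw [← h2, map_add]
    have : (C z * C w : PowerSeries ℂ) = 1 := by rw [← map_mul, h1, map_one]
    linear_combination (-X^2) * this
  have hF := lgF_sq s
  have hz := lgG_sq z
  have hw := lgG_sq w
  rw [hq] at hF
  have hne : (1 - C z * X) * (1 - C w * X) ≠ (0 : PowerSeries ℂ) := by
    intro h; rw [h] at hF; simp at hF
  have : (lgF s)^2 = (lgG z * lgG w)^2 := by
    apply mul_right_cancel₀ hne
    rw [hF]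
    linear_combination (-(lgG w)^2 * (1 - C w * X)) * hz - hw
  rcases sq_eq_sq_iff_eq_or_eq_neg.1 this with h | h
  · exact h
  · exfalso
    have := congrArg (constantCoeff (R := ℂ)) h
    simp [lgF, lgG, lgA, lg_zero] at this
    norm_num [Complex.ext_iff] at this

lemma lgA_summ (w : ℂ) (hw : ‖w‖ < 1) : Summable fun n => ‖(lgA n : ℂ) * w^n‖ := by
  refine Summable.of_nonneg_of_le (fun _ => norm_nonneg _) (fun n => ?_)
    (summable_geometric_of_lt_one (norm_nonneg w) hw)
  rw [norm_mul, norm_pow]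
  have h1 : ‖(lgA n : ℂ)‖ ≤ 1 := by
    rw [Complex.norm_real, Real.norm_of_nonneg (by unfold lgA; positivity)]
    unfold lgA
    rw [div_le_one (by positivity)]
    exact_mod_cast Nat.centralBinom_le_four_pow n
  exact mul_le_of_le_one_left (by positivity) h1

lemma lgA_sq (w : ℂ) (hw : ‖w‖ < 1) : (∑' n, (lgA n : ℂ) * w^n)^2 = (1-w)⁻¹ := by
  rw [sq, tsum_mul_tsum_eq_tsum_sum_antidiagonal_of_summable_norm (lgA_summ w hw) (lgA_summ w hw),
    ← tsum_geometric_of_norm_lt_one hw]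
  congr 1
  ext n
  have h : (lgG w)^2 = PowerSeries.mk fun n => w^n := by
    have h1 : (PowerSeries.mk fun n => w^n) * (1 - C w * X) = 1 := by
      have : (PowerSeries.mk fun n => w^n) * (1 - C w * X) =
        (PowerSeries.mk fun n => w^n) - C w * (X * (PowerSeries.mk fun n => w^n)) := by ring
      rw [this]
      ext n
      rcases n with _ | n
      · simp
      · simp [coeff_succ_X_mul, pow_succ', PowerSeries.coeff_one]
    have h2 := lgG_sq w
    have hne : (1 - C w * X) ≠ (0 : PowerSeries ℂ) := by
      intro h; rw [h] at h2; simp at h2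
    exact mul_right_cancel₀ hne (h2.trans h1.symm)
  have := congrArg (coeff n) h
  rw [sq, coeff_mul] at this
  simpa [lgG] using this

end

/-- Generating function of the Legendre polynomials: for `s ∈ [−1,1]` and `t ∈ [0,1)`,
`1 − 2st + t² > 0` and `(1 − 2st + t²)^{−1/2} = Σ_{l} P_l(s) t^l`, the series
converging absolutely. -/
theorem stmt2 (s t : ℝ) (hs : -1 ≤ s) (hs' : s ≤ 1) (ht : 0 ≤ t) (ht' : t < 1) :
    0 < 1 - 2 * s * t + t ^ 2 ∧
    Summable (fun l : ℕ => |legendreP l s * t ^ l|) ∧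
    ∑' l : ℕ, legendreP l s * t ^ l = (Real.sqrt (1 - 2 * s * t + t ^ 2))⁻¹ := by
  have hq : 0 < 1 - 2 * s * t + t ^ 2 := by nlinarith [mul_nonneg (sub_nonneg.2 hs') ht, mul_pos (sub_pos.2 ht') (sub_pos.2 ht')]
  have hr : √(1 - s^2) ^ 2 = 1 - s^2 := Real.sq_sqrt (by nlinarith)
  set z : ℂ := ⟨s, √(1-s^2)⟩ with hz
  set w : ℂ := (starRingEnd ℂ) z with hw
  have h1 : z * w = 1 := by
    apply Complex.ext
    · simp [hw, hz]; linarith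
    · simp [hw, hz]; ring
  have h2 : z + w = 2 * s := by
    apply Complex.ext
    · simp [hw, hz]; ring
    · simp [hw, hz]
  have hzn : ‖z‖ = 1 := by
    have : ‖z‖^2 = 1 := by
      have := congrArg norm h1
      rw [norm_mul, hw, Complex.norm_conj, norm_one] at this
      rw [sq, this]
    nlinarith [norm_nonneg z]
  have hzt : ‖z * t‖ < 1 := by
    rw [norm_mul, hzn, Complex.norm_real, Real.norm_of_nonneg ht]; linarith
  have hwt : ‖w * t‖ < 1 := by
    rw [norm_mul, hw, Complex.norm_conj, hzn, Complex.norm_real, Real.norm_of_nonneg ht]; linarith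
  have hP : ∀ n, ∑ kl ∈ Finset.HasAntidiagonal.antidiagonal n,
      ((lgA kl.1 : ℂ) * (z*t)^kl.1) * ((lgA kl.2 : ℂ) * (w*t)^kl.2) =
      ((legendreP n s * t^n : ℝ) : ℂ) := by
    intro n
    have := congrArg (PowerSeries.coeff n) (lgF_eq s z w h1 h2)
    rw [PowerSeries.coeff_mul] at this
    simp only [lgF, lgG, PowerSeries.coeff_mk] at this
    push_cast
    rw [this, Finset.sum_mul]
    refine Finset.sum_congr rfl fun x hx => ?_
    rw [← Finset.HasAntidiagonal.mem_antidiagonal.1 hx, pow_add]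
    ring
  have hsum := summable_norm_sum_mul_antidiagonal_of_summable_norm (lgA_summ _ hzt) (lgA_summ _ hwt)
  have htsum := tsum_mul_tsum_eq_tsum_sum_antidiagonal_of_summable_norm (lgA_summ _ hzt) (lgA_summ _ hwt)
  simp only [hP] at hsum htsum
  refine ⟨hq, by simpa only [Complex.norm_real, Real.norm_eq_abs] using hsum, ?_⟩
  rw [← Complex.ofReal_tsum] at htsum
  have hconj : ∑' n, (lgA n : ℂ) * (w*t)^n = (starRingEnd ℂ) (∑' n, (lgA n : ℂ) * (z*t)^n) := by
    rw [Complex.conj_tsum]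
    simp [hw]
  have hpos : 0 ≤ ∑' l : ℕ, legendreP l s * t ^ l := by
    rw [hconj, Complex.mul_conj] at htsum
    rw [← Complex.ofReal_injective htsum]
    exact Complex.normSq_nonneg _
  have hsq : (∑' l : ℕ, legendreP l s * t ^ l)^2 = (1 - 2*s*t + t^2)⁻¹ := by
    apply Complex.ofReal_injective
    rw [Complex.ofReal_pow, ← htsum, mul_pow, lgA_sq _ hzt, lgA_sq _ hwt, ← mul_inv]
    push_cast
    congr 1
    linear_combination (t:ℂ)^2 * h1 - t * h2
  rw [← Real.sqrt_inv, ← hsq, Real.sqrt_sq hpos]
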